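/- Let M ≥ 1 and let μ̄ : ℝ₊^M → ℝ₊^M satisfy Condition 1 and Condition 2. Let D > 0 and let ε : ℝ₊^M → ℝ^M satisfy ‖ε(q)‖ ≤ D and q + ε(q) ∈ ℝ₊^M for every q ∈ ℝ₊^M. Then the perturbed weight map μ̃(q) := μ̄(q + ε(q)) also satisfies Condition 1 and Condition 2. -/

import Mathlib

/-!
A self-map `T` of `K` that moves points by at most `D` preserves "tending to infinity in `K`", so
eventual statements can be pulled back along `T`. Pulling back costs only a larger window: points
at distance less than `C` go to points at distance less than `C + 2 * D`, and a coordinate that is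
`L`-Lipschitz and less than `C` stays less than `C + L * D`. Conditions 1 and 2 hold for windows of
every size, so they absorb this loss. The queueing case is `T q = q + e q` on the orthant.
-/

open scoped BigOperators

/-- Condition 1 for a weight map on the nonnegative orthant of `ℝ^M`. -/
def Condition1 (M : ℕ) (μ : EuclideanSpace ℝ (Fin M) → Fin M → ℝ) : Prop :=
  ∀ ε ∈ Set.Ioo (0 : ℝ) 1, ∀ C > (0 : ℝ), ∃ B > (0 : ℝ),
    ∀ i : Fin M, ∀ q : EuclideanSpace ℝ (Fin M), (∀ j, 0 ≤ q j) → ‖q‖ > B →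
      ∀ Δq : EuclideanSpace ℝ (Fin M), ‖Δq‖ < C → (∀ j, 0 ≤ q j + Δq j) →
        |μ (q + Δq) i - μ q i| ≤ ε

/-- Condition 2 for a weight map on the nonnegative orthant of `ℝ^M`. -/
def Condition2 (M : ℕ) (μ : EuclideanSpace ℝ (Fin M) → Fin M → ℝ) : Prop :=
  ∀ ε ∈ Set.Ioo (0 : ℝ) 1, ∀ C > (0 : ℝ), ∃ B > (0 : ℝ),
    ∀ i : Fin M, ∀ q : EuclideanSpace ℝ (Fin M), (∀ j, 0 ≤ q j) → ‖q‖ > B →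
      q i < C → μ q i ≤ ε

open Bornology Filter Set
open scoped NNReal

section PseudoMetricSpace

variable {α β ι : Type*} [PseudoMetricSpace α] [PseudoMetricSpace β] {K : Set α} {T : α → α} {D : ℝ}

/-- Condition 1 for a family of functions on a subset `K` of a pseudometric space: over windows of
any fixed size the oscillation tends to `0` at infinity in `K`, uniformly in the index. -/
def SlowlyVaryingOn (f : α → ι → β) (K : Set α) : Prop :=
  ∀ ε > (0 : ℝ), ∀ C : ℝ, ∀ᶠ x in cobounded α ⊓ 𝓟 K,
    ∀ i, ∀ y ∈ K, dist y x < C → dist (f y i) (f x i) ≤ ε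

/-- Condition 2 for a family of functions on a subset `K` of a pseudometric space, with `φ x i` in
the role of the `i`-th coordinate of `x`: where this coordinate stays below a fixed bound, the upper
limit of `f · i` at infinity in `K` is at most `0`, uniformly in the index. -/
def AsymptoticallyNonposOn (φ f : α → ι → ℝ) (K : Set α) : Prop :=
  ∀ ε > (0 : ℝ), ∀ C : ℝ, ∀ᶠ x in cobounded α ⊓ 𝓟 K, ∀ i, φ x i < C → f x i ≤ ε

theorem tendsto_cobounded_of_dist_le {γ : Type*} {l : Filter γ} {u v : γ → α}
    (hu : Tendsto u l (cobounded α)) (huv : ∀ᶠ x in l, dist (u x) (v x) ≤ D) :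
    Tendsto v l (cobounded α) := by
  refine fun s hs => mem_map.2 ?_
  have hbdd : IsBounded (Metric.cthickening D sᶜ) := (isBounded_compl_iff.2 hs).cthickening
  filter_upwards [hu hbdd.compl, huv] with x hux hdist
  by_contra hvx
  exact hux (Metric.mem_cthickening_of_dist_le _ _ _ _ hvx hdist)

theorem tendsto_cobounded_inf_principal_of_dist_le (hT : MapsTo T K K)
    (hD : ∀ x ∈ K, dist x (T x) ≤ D) :
    Tendsto T (cobounded α ⊓ 𝓟 K) (cobounded α ⊓ 𝓟 K) :=
  tendsto_inf.2 ⟨tendsto_cobounded_of_dist_le (tendsto_id.mono_left inf_le_left)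
      (eventually_inf_principal.2 (.of_forall hD)),
    (tendsto_principal_principal.2 hT).mono_left inf_le_right⟩

theorem SlowlyVaryingOn.comp_of_dist_le {f : α → ι → β} (hf : SlowlyVaryingOn f K)
    (hT : MapsTo T K K) (hD : ∀ x ∈ K, dist x (T x) ≤ D) : SlowlyVaryingOn (f ∘ T) K := by
  intro ε hε C
  have hev := (tendsto_cobounded_inf_principal_of_dist_le hT hD).eventually (hf ε hε (C + 2 * D))
  filter_upwards [hev, mem_inf_of_right (mem_principal_self K)] with x hx hxK i y hyK hyx
  refine hx i (T y) (hT hyK) ?_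
  calc dist (T y) (T x) ≤ dist (T y) y + dist y x + dist x (T x) := dist_triangle4 ..
    _ < C + 2 * D := by linarith [hD x hxK, hD y hyK, dist_comm y (T y)]

theorem AsymptoticallyNonposOn.comp_of_dist_le {φ f : α → ι → ℝ} {L : ℝ≥0}
    (hf : AsymptoticallyNonposOn φ f K) (hφ : ∀ i, LipschitzOnWith L (φ · i) K)
    (hT : MapsTo T K K) (hD : ∀ x ∈ K, dist x (T x) ≤ D) :
    AsymptoticallyNonposOn φ (f ∘ T) K := by
  intro ε hε C
  have hev := (tendsto_cobounded_inf_principal_of_dist_le hT hD).eventually (hf ε hε (C + L * D))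
  filter_upwards [hev, mem_inf_of_right (mem_principal_self K)] with x hx hxK i hφx
  refine hx i ?_
  calc φ (T x) i ≤ φ x i + L * dist (T x) x := (hφ i).le_add_mul (hT hxK) hxK
    _ ≤ φ x i + L * D := by rw [dist_comm]; gcongr; exact hD x hxK
    _ < C + L * D := by gcongr

theorem stmt_18_general {φ f : α → ι → ℝ} {L : ℝ≥0} (hφ : ∀ i, LipschitzOnWith L (φ · i) K)
    (h1 : SlowlyVaryingOn f K) (h2 : AsymptoticallyNonposOn φ f K) (hT : MapsTo T K K)
    (hD : ∀ x ∈ K, dist x (T x) ≤ D) :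
    SlowlyVaryingOn (f ∘ T) K ∧ AsymptoticallyNonposOn φ (f ∘ T) K :=
  ⟨h1.comp_of_dist_le hT hD, h2.comp_of_dist_le hφ hT hD⟩

end PseudoMetricSpace

theorem exists_pos_forall_norm_gt_iff_eventually_cobounded {E : Type*} [SeminormedAddCommGroup E]
    {K : Set E} {p : E → Prop} :
    (∃ B > (0 : ℝ), ∀ x ∈ K, ‖x‖ > B → p x) ↔ ∀ᶠ x in cobounded E ⊓ 𝓟 K, p x := by
  rw [eventually_inf_principal, hasBasis_cobounded_norm.eventually_iff]
  constructor
  · rintro ⟨B, -, hB⟩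
    exact ⟨B + 1, trivial, fun x hx hxK => hB x hxK ((lt_add_one B).trans_le hx)⟩
  · rintro ⟨B, -, hB⟩
    exact ⟨max B 1, by positivity, fun x hxK hx => hB ((le_max_left B 1).trans hx.le) hxK⟩

theorem forall_mem_Ioo_forall_pos_iff {P : ℝ → ℝ → Prop}
    (hP : ∀ ⦃ε ε' C C'⦄, ε ≤ ε' → C' ≤ C → P ε C → P ε' C') :
    (∀ ε ∈ Ioo (0 : ℝ) 1, ∀ C > 0, P ε C) ↔ ∀ ε > 0, ∀ C, P ε C := by
  refine ⟨fun h ε hε C => ?_, fun h ε hε C _ => h ε hε.1 C⟩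
  have hmem : min ε (1 / 2) ∈ Ioo (0 : ℝ) 1 :=
    ⟨by positivity, (min_le_right _ _).trans_lt one_half_lt_one⟩
  exact hP (min_le_left _ _) (le_max_left C 1) (h _ hmem (max C 1) (by positivity))

theorem lipschitzWith_euclideanSpace_apply {ι : Type*} [Fintype ι] (i : ι) :
    LipschitzWith 1 (fun q : EuclideanSpace ℝ ι => q i) :=
  LipschitzWith.of_dist_le_mul fun x y => by
    simpa [dist_eq_norm] using PiLp.norm_apply_le (x - y) i

section EuclideanSpace

variable {M : ℕ} {μ : EuclideanSpace ℝ (Fin M) → Fin M → ℝ}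

/-- The nonnegative orthant of `ℝ^M`, the set of queue states. -/
def nonnegOrthant (M : ℕ) : Set (EuclideanSpace ℝ (Fin M)) := {q | ∀ j, 0 ≤ q j}

theorem condition1_iff_slowlyVaryingOn :
    Condition1 M μ ↔ SlowlyVaryingOn μ (nonnegOrthant M) := by
  unfold SlowlyVaryingOn
  rw [← forall_mem_Ioo_forall_pos_iff fun ε ε' C C' hε hC h =>
    h.mono fun q hq i y hy hyq => (hq i y hy (hyq.trans_le hC)).trans hε]
  refine forall₄_congr fun ε _ C _ => ?_
  rw [← exists_pos_forall_norm_gt_iff_eventually_cobounded]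
  refine exists_congr fun B => and_congr_right fun _ => ⟨fun h q hq hB i y hy hyq => ?_,
    fun h i q hq hB Δq hΔq hy => ?_⟩
  · have hyμ := h i q hq hB (y - q) (by rwa [← dist_eq_norm]) (by simpa [nonnegOrthant] using hy)
    rwa [add_sub_cancel] at hyμ
  · exact h q hq hB i (q + Δq) hy (by rwa [dist_self_add_left])

theorem condition2_iff_asymptoticallyNonposOn :
    Condition2 M μ ↔ AsymptoticallyNonposOn (fun q i => q i) μ (nonnegOrthant M) := by
  unfold AsymptoticallyNonposOn
  rw [← forall_mem_Ioo_forall_pos_iff fun ε ε' C C' hε hC h =>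
    h.mono fun q hq i hqi => (hq i (hqi.trans_le hC)).trans hε]
  refine forall₄_congr fun ε _ C _ => ?_
  rw [← exists_pos_forall_norm_gt_iff_eventually_cobounded]
  exact exists_congr fun B => and_congr_right fun _ =>
    ⟨fun h q hq hB i => h i q hq hB, fun h i q hq hB => h q hq hB i⟩

end EuclideanSpace

/-- Conditions 1 and 2 are preserved under bounded perturbations of the queue state
(imperfect queue state information). -/
theorem stmt_18 (M : ℕ) (hM : 1 ≤ M)
    (μ : EuclideanSpace ℝ (Fin M) → Fin M → ℝ)
    (h1 : Condition1 M μ) (h2 : Condition2 M μ)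
    (D : ℝ) (hD : 0 < D) (e : EuclideanSpace ℝ (Fin M) → EuclideanSpace ℝ (Fin M))
    (he : ∀ q : EuclideanSpace ℝ (Fin M), (∀ j, 0 ≤ q j) →
      ‖e q‖ ≤ D ∧ (∀ j, 0 ≤ q j + e q j)) :
    Condition1 M (fun q => μ (q + e q)) ∧ Condition2 M (fun q => μ (q + e q)) := by
  have hT : MapsTo (fun q => q + e q) (nonnegOrthant M) (nonnegOrthant M) :=
    fun q hq => (he q hq).2
  have hdist : ∀ q ∈ nonnegOrthant M, dist q (q + e q) ≤ D :=
    fun q hq => (dist_self_add_right _ _).trans_le (he q hq).1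
  rw [condition1_iff_slowlyVaryingOn] at h1 ⊢
  rw [condition2_iff_asymptoticallyNonposOn] at h2 ⊢
  exact stmt_18_general (fun i => (lipschitzWith_euclideanSpace_apply i).lipschitzOnWith) h1 h2
    hT hdist
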